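/- arXiv:0911.4050 — 5 statements merged into one kernel-verified Lean document; each statement's English description precedes it below -/
import Mathlib

section
/- Let R be a commutative ring, σ a type, and t : σ → R. Then the pre-crossed module (R⁺[σ], R, ∂) given by the augmentation ideal of MvPolynomial σ R with boundary the restriction of aeval t is the free pre-crossed module on t: for every pre-crossed module δ : C → R and every function ν : σ → C with δ(ν i) = t i for all i ∈ σ, there exists a unique map φ : R⁺[σ] → C that is additive, multiplicative, and R-linear, satisfies φ(X i) = ν i for all i ∈ σ, and satisfies δ ∘ φ = ∂. -/
open MvPolynomial

/-- The augmentation ideal `R⁺[σ]` of the polynomial algebra `MvPolynomial σ R`,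
i.e. the kernel of the constant-coefficient map. -/
noncomputable def aug (R : Type*) [CommRing R] (σ : Type*) : Ideal (MvPolynomial σ R) :=
  RingHom.ker (constantCoeff : MvPolynomial σ R →+* R)

/-- The augmentation ideal is closed under multiplication. -/
noncomputable instance {R : Type*} [CommRing R] {σ : Type*} : Mul (aug R σ) :=
  ⟨fun a b => ⟨a.1 * b.1, Ideal.mul_mem_left _ _ b.2⟩⟩

/-- The variable `X i` as an element of the augmentation ideal. -/
noncomputable def XinAug {R : Type*} [CommRing R] {σ : Type*} (i : σ) : aug R σ :=
  ⟨X i, by simp [aug, RingHom.mem_ker]⟩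

/-!
A family `ν : σ → A` in a commutative non-unital `R`-algebra `A` induces an algebra homomorphism
from `MvPolynomial σ R` to the unitization `R ⊕ A`, sending `X i` to `(0, ν i)`. Its first
component is the constant coefficient, so on the augmentation ideal the second component is
multiplicative. As the augmentation ideal is generated by the variables as a non-unital algebra,
homomorphisms out of it are determined by their values on the variables; this gives uniqueness, and
also `δ ∘ φ = ∂`, which is an equality of two homomorphisms that agree on the variables.
-/

/-- A map that is additive, multiplicative and `R`-linear, bundled as a homomorphism of non-unital
`R`-algebras. -/
def nonUnitalAlgHomOfMap {R A B : Type*} [Semiring R] [NonUnitalNonAssocSemiring A] [Module R A]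
    [NonUnitalNonAssocSemiring B] [Module R B] (f : A → B)
    (map_add : ∀ x y, f (x + y) = f x + f y) (map_mul : ∀ x y, f (x * y) = f x * f y)
    (map_smul : ∀ (r : R) x, f (r • x) = r • f x) : A →ₙₐ[R] B where
  toFun := f
  map_smul' := map_smul
  map_zero' := by simpa only [zero_smul] using map_smul 0 0
  map_add' := map_add
  map_mul' := map_mul

theorem snd_mul_of_fst_eq_zero {R A : Type*} [MulZeroClass R] [AddZeroClass A] [Mul A]
    [SMulWithZero R A] {x y : Unitization R A} (hx : x.fst = 0) (hy : y.fst = 0) :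
    (x * y).snd = x.snd * y.snd := by
  rw [Unitization.snd_mul, hx, hy, zero_smul, zero_smul, zero_add, zero_add]

section evalUnitization

variable {R σ A : Type*} [CommSemiring R] [NonUnitalCommSemiring A] [Module R A]
  [IsScalarTower R A A] [SMulCommClass R A A]

/-- Evaluation of polynomials at a family `ν` of elements of a non-unital algebra `A`, with values
in the unitization of `A`, where constants make sense. -/
noncomputable def evalUnitization (ν : σ → A) : MvPolynomial σ R →ₐ[R] Unitization R A :=
  aeval fun i ↦ (ν i : Unitization R A)

theorem evalUnitization_X (ν : σ → A) (i : σ) :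
    evalUnitization ν (X i : MvPolynomial σ R) = (ν i : Unitization R A) :=
  aeval_X _ i

theorem fst_evalUnitization (ν : σ → A) (p : MvPolynomial σ R) :
    (evalUnitization ν p).fst = constantCoeff p :=
  calc (evalUnitization ν p).fst
      = aeval (fun i ↦ Unitization.fstHom R A (ν i)) p :=
        comp_aeval_apply _ (Unitization.fstHom R A) p
    _ = constantCoeff p := aeval_zero' p

end evalUnitization

namespace aug

variable {R σ : Type*} [CommRing R]

theorem mem_iff {p : MvPolynomial σ R} : p ∈ aug R σ ↔ constantCoeff p = 0 :=
  RingHom.mem_ker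

theorem constantCoeff_coe (p : aug R σ) : constantCoeff (p : MvPolynomial σ R) = 0 :=
  mem_iff.mp p.2

/-- The projection of `MvPolynomial σ R = R ⊕ R⁺[σ]` onto the augmentation ideal, which subtracts
the constant coefficient. -/
noncomputable def proj : MvPolynomial σ R →ₗ[R] aug R σ where
  toFun p := ⟨p - C (constantCoeff p), by simp [mem_iff]⟩
  map_add' p q := Subtype.ext (by simp [add_sub_add_comm])
  map_smul' r p := Subtype.ext (by simp [smul_eq_C_mul, mul_sub])

theorem coe_proj (p : MvPolynomial σ R) :
    (proj p : MvPolynomial σ R) = p - C (constantCoeff p) :=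
  rfl

theorem proj_coe (p : aug R σ) : proj (p : MvPolynomial σ R) = p :=
  Subtype.ext (by simp [coe_proj, constantCoeff_coe])

theorem proj_C (r : R) : proj (C r : MvPolynomial σ R) = 0 :=
  Subtype.ext (by simp [coe_proj])

theorem proj_mul_X (p : MvPolynomial σ R) (i : σ) :
    proj (p * X i) = proj p * XinAug i + constantCoeff p • XinAug i := by
  refine Subtype.ext ?_
  change p * X i - C (constantCoeff (p * X i)) =
    (p - C (constantCoeff p)) * X i + constantCoeff p • X i
  simp only [map_mul, constantCoeff_X, mul_zero, map_zero, smul_eq_C_mul]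
  ring

@[elab_as_elim]
theorem induction_on {motive : aug R σ → Prop} (p : aug R σ) (zero : motive 0)
    (X : ∀ i, motive (XinAug i)) (add : ∀ p q, motive p → motive q → motive (p + q))
    (mul : ∀ p q, motive p → motive q → motive (p * q))
    (smul : ∀ (r : R) p, motive p → motive (r • p)) : motive p := by
  suffices ∀ q : MvPolynomial σ R, motive (proj q) from proj_coe p ▸ this p
  intro q
  induction q using MvPolynomial.induction_on with
  | C r => exact (proj_C (σ := σ) r).symm ▸ zero
  | add q q' hq hq' => exact map_add proj q q' ▸ add _ _ hq hq'
  | mul_X q i hq => exact proj_mul_X q i ▸ add _ _ (mul _ _ hq (X i)) (smul _ _ (X i))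

theorem hom_ext {B : Type*} [NonUnitalNonAssocSemiring B] [DistribMulAction R B]
    {f g : aug R σ →ₙₐ[R] B} (h : ∀ i, f (XinAug i) = g (XinAug i)) : f = g := by
  ext p
  induction p using aug.induction_on with
  | zero => rw [map_zero, map_zero]
  | X i => exact h i
  | add p q hp hq => rw [map_add, map_add, hp, hq]
  | mul p q hp hq =>
    calc f (p * q) = f p * f q := map_mul f p q
      _ = g p * g q := by rw [hp, hq]
      _ = g (p * q) := (map_mul g p q).symm
  | smul r p hp => rw [map_smul, map_smul, hp]

/-- The boundary `∂ : R⁺[σ] → R`, the restriction of `aeval t`. -/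
noncomputable def boundary (t : σ → R) : aug R σ →ₙₐ[R] R :=
  nonUnitalAlgHomOfMap (fun p ↦ aeval t (p : MvPolynomial σ R)) (fun p q ↦ map_add _ p.1 q.1)
    (fun p q ↦ map_mul _ p.1 q.1) (fun r p ↦ map_smul _ r p.1)

theorem boundary_XinAug (t : σ → R) (i : σ) : boundary t (XinAug i) = t i :=
  aeval_X t i

section lift

variable {A : Type*} [NonUnitalCommSemiring A] [Module R A] [IsScalarTower R A A]
  [SMulCommClass R A A]

theorem fst_evalUnitization_coe (ν : σ → A) (p : aug R σ) :
    (evalUnitization ν (p : MvPolynomial σ R)).fst = 0 :=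
  (fst_evalUnitization ν _).trans (constantCoeff_coe p)

/-- The homomorphism of non-unital algebras `R⁺[σ] → A` with `X i ↦ ν i`, obtained by evaluating in
the unitization of `A`. -/
noncomputable def lift (ν : σ → A) : aug R σ →ₙₐ[R] A :=
  nonUnitalAlgHomOfMap (fun p ↦ (evalUnitization ν (p : MvPolynomial σ R)).snd)
    (fun p q ↦ by rw [Submodule.coe_add, map_add, Unitization.snd_add])
    (fun p q ↦ by
      rw [MulMemClass.coe_mul, map_mul, snd_mul_of_fst_eq_zero (fst_evalUnitization_coe ν p)
        (fst_evalUnitization_coe ν q)])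
    (fun r p ↦ by rw [Submodule.coe_smul_of_tower, map_smul, Unitization.snd_smul])

theorem lift_XinAug (ν : σ → A) (i : σ) : lift ν (XinAug i : aug R σ) = ν i :=
  congrArg (·.snd) (evalUnitization_X (R := R) ν i)

end lift

end aug

/-- The pre-crossed module `(R⁺[σ], R, ∂)`, with `∂` the restriction of
`aeval t` to the augmentation ideal, is the *free pre-crossed module* on `t : σ → R`:
for every pre-crossed module `δ : C → R` and every `ν : σ → C` with `δ (ν i) = t i`,
there is a unique additive, multiplicative, `R`-linear map `φ : R⁺[σ] → C` with
`φ (X i) = ν i` and `δ ∘ φ = ∂`. -/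
theorem aug_free_preCrossedModule
    {R : Type*} [CommRing R] {σ : Type*} (t : σ → R)
    {C : Type*} [NonUnitalCommRing C] [Module R C]
    (hact : ∀ (r : R) (c c' : C), r • (c * c') = (r • c) * c')
    (δ : C → R)
    (hadd : ∀ c c' : C, δ (c + c') = δ c + δ c')
    (hmul : ∀ c c' : C, δ (c * c') = δ c * δ c')
    (hCM1 : ∀ (r : R) (c : C), δ (r • c) = r * δ c)
    (ν : σ → C) (hν : ∀ i : σ, δ (ν i) = t i) :
    ∃! φ : aug R σ → C,
      (∀ p q : aug R σ, φ (p + q) = φ p + φ q) ∧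
      (∀ p q : aug R σ, φ (p * q) = φ p * φ q) ∧
      (∀ (r : R) (p : aug R σ), φ (r • p) = r • φ p) ∧
      (∀ i : σ, φ (XinAug i) = ν i) ∧
      (∀ p : aug R σ, δ (φ p) = aeval t (p : MvPolynomial σ R)) := by
  have : IsScalarTower R C C := ⟨fun r c c' ↦ (hact r c c').symm⟩
  have : SMulCommClass R C C := ⟨fun r c c' ↦ by
    rw [smul_eq_mul, smul_eq_mul, mul_comm, hact, mul_comm]⟩
  let δ' : C →ₙₐ[R] R := nonUnitalAlgHomOfMap δ hadd hmul hCM1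
  have hδ : δ'.comp (aug.lift ν) = aug.boundary t := aug.hom_ext fun i ↦ by
    rw [NonUnitalAlgHom.comp_apply, aug.lift_XinAug, aug.boundary_XinAug]
    exact hν i
  refine ⟨aug.lift ν, ⟨map_add _, map_mul _, map_smul _, aug.lift_XinAug ν,
    DFunLike.congr_fun hδ⟩, ?_⟩
  rintro φ ⟨φ_add, φ_mul, φ_smul, φ_X, -⟩
  have hφ : nonUnitalAlgHomOfMap φ φ_add φ_mul φ_smul = aug.lift ν :=
    aug.hom_ext fun i ↦ (φ_X i).trans (aug.lift_XinAug ν i).symm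
  exact congrArg DFunLike.coe hφ
end

section
/- Let R be a commutative ring, n a natural number, and t : Fin n → R. Let M = ker(constantCoeff : MvPolynomial (Fin n) R → R) be the augmentation ideal and let P₁ be the R-submodule of M generated by the Peiffer elements p * q − C(aeval t p) * q for p, q ∈ M. Then every element of M is congruent modulo P₁ to a linear polynomial: for every m ∈ M there exists r : Fin n → R such that m − ∑_{i} C(r i) * X i ∈ P₁. -/
open MvPolynomial

/-!
Modulo the Peiffer elements, an element `p` of the ideal `M` acts on `M` as the scalar `p(t)`.
Every polynomial is a constant plus an element of `M`, so in fact the whole polynomial ring acts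
on `M / P₁` through evaluation at `t`, that is, through `R`. The variables generate `M` as an
ideal, hence their classes generate `M / P₁` as an `R`-module.
-/

section PeifferSubmodule

variable {R A : Type*} [CommRing R] [CommRing A] [Algebra R A]

/-- The `R`-submodule generated by the Peiffer elements `p * q - f p • q` with `p, q ∈ I`; the
quotient of `I` by it is the largest one on which every `p ∈ I` acts as the scalar `f p`.
It is encoded as a submodule of the ambient algebra `A` rather than of `I`. -/
def peifferSubmodule (I : Ideal A) (f : A →ₐ[R] R) : Submodule R A :=
  Submodule.span R {z | ∃ p q : A, p ∈ I ∧ q ∈ I ∧ z = p * q - f p • q}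

variable {I : Ideal A} {f : A →ₐ[R] R}

theorem mul_sub_smul_mem_peifferSubmodule (hI : Function.Surjective (algebraMap R (A ⧸ I)))
    (a : A) {q : A} (hq : q ∈ I) : a * q - f a • q ∈ peifferSubmodule I f := by
  obtain ⟨r, hr⟩ := hI (Ideal.Quotient.mk I a)
  have hp : a - algebraMap R A r ∈ I := Ideal.Quotient.eq.mp hr.symm
  have h : a * q - f a • q = (a - algebraMap R A r) * q - f (a - algebraMap R A r) • q := by
    simp only [map_sub, AlgHom.commutes, Algebra.algebraMap_self_apply, Algebra.smul_def]
    ring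
  exact Submodule.subset_span ⟨_, q, hp, hq, h⟩

theorem restrictScalars_span_le_span_sup_peifferSubmodule {s : Set A}
    (hs : Function.Surjective (algebraMap R (A ⧸ Ideal.span s))) :
    (Ideal.span s).restrictScalars R ≤
      Submodule.span R s ⊔ peifferSubmodule (Ideal.span s) f := by
  intro x hx
  induction hx using Submodule.span_induction with
  | mem x hx => exact Submodule.mem_sup_left (Submodule.subset_span hx)
  | zero => exact zero_mem _
  | add x y _ _ hx hy => exact add_mem hx hy
  | smul a x hx ih =>
    rw [smul_eq_mul, ← sub_add_cancel (a * x) (f a • x)]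
    exact add_mem (Submodule.mem_sup_right (mul_sub_smul_mem_peifferSubmodule hs a hx))
      (Submodule.smul_mem _ _ ih)

end PeifferSubmodule

section MvPolynomial

variable {σ R : Type*} [CommRing R]

theorem mem_idealOfVars_iff_constantCoeff_eq_zero {p : MvPolynomial σ R} :
    p ∈ idealOfVars σ R ↔ constantCoeff p = 0 := by
  simpa [constantCoeff_eq, Finsupp.degree_eq_zero_iff] using mem_pow_idealOfVars_iff' 1 p

theorem algebraMap_quotient_idealOfVars_surjective :
    Function.Surjective (algebraMap R (MvPolynomial σ R ⧸ idealOfVars σ R)) := by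
  intro x
  obtain ⟨p, rfl⟩ := Ideal.Quotient.mk_surjective x
  refine ⟨constantCoeff p, Ideal.Quotient.eq.mpr ?_⟩
  simp [mem_idealOfVars_iff_constantCoeff_eq_zero]

theorem peifferSubmodule_idealOfVars (t : σ → R) :
    peifferSubmodule (idealOfVars σ R) (aeval t) = Submodule.span R
      {z | ∃ p q : MvPolynomial σ R,
        constantCoeff p = 0 ∧ constantCoeff q = 0 ∧ z = p * q - C (aeval t p) * q} := by
  simp only [peifferSubmodule, mem_idealOfVars_iff_constantCoeff_eq_zero, smul_eq_C_mul]

theorem linear_representative_mod_peiffer_general (t : σ → R) {m : MvPolynomial σ R}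
    (hm : constantCoeff m = 0) :
    ∃ r : σ →₀ R, m - r.sum (fun i a ↦ C a * X i) ∈
      peifferSubmodule (idealOfVars σ R) (aeval t) := by
  have hm' : m ∈ Submodule.span R (Set.range X) ⊔ peifferSubmodule (idealOfVars σ R) (aeval t) :=
    restrictScalars_span_le_span_sup_peifferSubmodule algebraMap_quotient_idealOfVars_surjective
      (mem_idealOfVars_iff_constantCoeff_eq_zero.mpr hm)
  obtain ⟨l, hl, z, hz, rfl⟩ := Submodule.mem_sup.mp hm'
  obtain ⟨r, rfl⟩ := Finsupp.mem_span_range_iff_exists_finsupp.mp hl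
  exact ⟨r, by simpa only [smul_eq_C_mul, add_sub_cancel_left] using hz⟩

end MvPolynomial

/-- Let `M` be the augmentation ideal of `MvPolynomial (Fin n) R` and let
`P₁` be the `R`-submodule of `M` generated by the Peiffer elements
`p * q - C (aeval t p) * q` for `p, q ∈ M`.  Then every element of `M` is congruent modulo
`P₁` to a linear polynomial: for every `m ∈ M` there is `r : Fin n → R` with
`m - ∑ i, C (r i) * X i ∈ P₁`. -/
theorem linear_representative_mod_peiffer
    {R : Type*} [CommRing R] (n : ℕ) (t : Fin n → R)
    (P₁ : Submodule R (MvPolynomial (Fin n) R))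
    (hP₁ : P₁ = Submodule.span R
      {z : MvPolynomial (Fin n) R | ∃ p q : MvPolynomial (Fin n) R,
        constantCoeff p = 0 ∧ constantCoeff q = 0 ∧ z = p * q - C (aeval t p) * q}) :
    ∀ m : MvPolynomial (Fin n) R, constantCoeff m = 0 →
      ∃ r : Fin n → R, m - ∑ i : Fin n, C (r i) * X i ∈ P₁ := by
  intro m hm
  obtain ⟨r, hr⟩ := linear_representative_mod_peiffer_general t hm
  rw [hP₁, ← peifferSubmodule_idealOfVars]
  exact ⟨r, by simpa [Finsupp.sum_fintype] using hr⟩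
end

section
/- Let R be a commutative ring, n a natural number, and t : Fin n → R. Let M = ker(constantCoeff : MvPolynomial (Fin n) R → R), let P₁ be the R-submodule of M generated by the Peiffer elements p * q − C(aeval t p) * q (p, q ∈ M), and let K be the R-submodule of Fin n → R generated by the elements t i • e j − t j • e i for i, j ∈ Fin n, where e i denotes the i-th standard basis vector Pi.single i 1. Then there is an R-module isomorphism M/P₁ ≅ (Fin n → R)/K sending the class of X i to the class of e i; moreover, under this isomorphism the map M/P₁ → R induced by aeval t corresponds to the map (Fin n → R)/K → R induced by r ↦ ∑_{i} r i * t i. -/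
/-!
Call a linear form `δ : N → R` on a commutative non-unital `R`-algebra a crossed module when
`δ x • y = x * y`. Let `F` be free on the variables, with Koszul relations `K`. Both `M ⧸ P₁` and
`F ⧸ K` are the free crossed module on `t`, for complementary reasons. On `F ⧸ K` the Koszul
relations say that `δ x • y` is symmetric in `x` and `y`, so this formula *defines* a commutative
product; its unitization is a commutative algebra, and evaluating polynomials there at the basis
vectors gives a multiplicative map `M → F ⧸ K`, which therefore kills the Peiffer elements.
Conversely `p * q = q * p` yields the Koszul relations in `M ⧸ P₁`. The two maps are mutually
inverse because modulo Peiffer elements a polynomial acts on `M` through its value at `t`, so that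
the classes of the variables span `M ⧸ P₁` over `R`.
-/

open MvPolynomial

/-- The Peiffer ideal `P₁`: the `R`-submodule of `M` generated by the Peiffer elements
`p * q - C (aeval t p) * q` for `p, q ∈ M`.  (Here `r • q = C r * q`.) -/
noncomputable def peifferIdeal {R : Type*} [CommRing R] {σ : Type*} (t : σ → R) :
    Submodule R (aug R σ) :=
  Submodule.span R
    {z : aug R σ | ∃ p q : aug R σ, z = p * q - (aeval t (p : MvPolynomial σ R)) • q}

/-- The Koszul-type relation submodule `K` of `Fin n → R`, generated by the elements
`t i • e j - t j • e i` where `e i = Pi.single i 1`. -/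
noncomputable def koszulRel {R : Type*} [CommRing R] {n : ℕ} (t : Fin n → R) :
    Submodule R (Fin n → R) :=
  Submodule.span R
    {z : Fin n → R | ∃ i j : Fin n, z = t i • (Pi.single j 1 : Fin n → R) - t j • (Pi.single i 1 : Fin n → R)}

section Augmentation

variable {R σ N : Type*} [CommRing R] [NonUnitalCommRing N] [Module R N] [IsScalarTower R N N]
  [SMulCommClass R N N]

theorem fst_aeval_inr (v : σ → N) (p : MvPolynomial σ R) :
    (aeval (fun i => (v i : Unitization R N)) p).fst = constantCoeff p := by
  have h : (Unitization.fstHom R N).comp (aeval fun i => (v i : Unitization R N)) =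
      aeval (0 : σ → R) := by
    ext i
    simp
  simpa using DFunLike.congr_fun h p

/-- Substitution of elements `v i` of a non-unital algebra `N` into polynomials without constant
term, computed in the unitization of `N`. -/
noncomputable def augLift (v : σ → N) : aug R σ →ₗ[R] N :=
  Unitization.sndHom R R N ∘ₗ (aeval fun i => (v i : Unitization R N)).toLinearMap ∘ₗ
    (aug R σ).subtype.restrictScalars R

theorem inr_augLift (v : σ → N) (p : aug R σ) :
    (augLift v p : Unitization R N) =
      aeval (fun i => (v i : Unitization R N)) (p : MvPolynomial σ R) :=
  Unitization.ext ((fst_aeval_inr v p.1).trans p.2).symm rfl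

@[simp]
theorem augLift_XinAug (v : σ → N) (i : σ) : augLift v (XinAug i : aug R σ) = v i := by
  simp [augLift, XinAug]

theorem augLift_mul (v : σ → N) (p q : aug R σ) :
    augLift v (p * q) = augLift v p * augLift v q := by
  apply Unitization.inr_injective (R := R)
  rw [Unitization.inr_mul]
  simp only [inr_augLift]
  exact map_mul _ p.1 q.1

theorem map_augLift (δ : N →ₙₐ[R] R) (v : σ → N) (p : aug R σ) :
    δ (augLift v p) = aeval (fun i => δ (v i)) (p : MvPolynomial σ R) := by
  have h : (Unitization.lift δ).comp (aeval fun i => (v i : Unitization R N)) =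
      aeval fun i => δ (v i) := by
    ext i
    simp
  rw [← h, AlgHom.comp_apply, ← inr_augLift]
  simp

end Augmentation

section Peiffer

variable {R σ : Type*} [CommRing R] (t : σ → R)

theorem peifferIdeal_le_ker {N : Type*} [AddCommGroup N] [Module R N] (f : aug R σ →ₗ[R] N)
    (hf : ∀ p q : aug R σ, f (p * q) = aeval t (p : MvPolynomial σ R) • f q) :
    peifferIdeal t ≤ LinearMap.ker f := by
  refine Submodule.span_le.2 ?_
  rintro _ ⟨p, q, rfl⟩
  simp [hf]

/-- The boundary `M ⧸ P₁ → R` of the free crossed module, induced by evaluation at `t`. -/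
noncomputable def peifferBoundary : (aug R σ ⧸ peifferIdeal t) →ₗ[R] R :=
  (peifferIdeal t).liftQ ((aeval t).toLinearMap ∘ₗ (aug R σ).subtype.restrictScalars R)
    (peifferIdeal_le_ker t _ fun p q => map_mul (aeval t) p.1 q.1)

@[simp]
theorem peifferBoundary_mk (p : aug R σ) :
    peifferBoundary t (Submodule.Quotient.mk p) = aeval t (p : MvPolynomial σ R) :=
  rfl

theorem peifferQuotient_mk_mul (p q : aug R σ) :
    (Submodule.Quotient.mk (p * q) : aug R σ ⧸ peifferIdeal t) =
      aeval t (p : MvPolynomial σ R) • Submodule.Quotient.mk q :=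
  (Submodule.Quotient.eq _).2 (Submodule.subset_span ⟨p, q, rfl⟩)

theorem peifferBoundary_smul_comm (x y : aug R σ ⧸ peifferIdeal t) :
    peifferBoundary t x • y = peifferBoundary t y • x := by
  induction x using Submodule.Quotient.induction_on with | _ p
  induction y using Submodule.Quotient.induction_on with | _ q
  have hpq : p * q = q * p := Subtype.ext (mul_comm _ _)
  rw [peifferBoundary_mk, peifferBoundary_mk, ← peifferQuotient_mk_mul, hpq, peifferQuotient_mk_mul]

theorem peifferQuotient_mk_smul (c : MvPolynomial σ R) (q : aug R σ) :
    (Submodule.Quotient.mk (c • q) : aug R σ ⧸ peifferIdeal t) =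
      aeval t c • Submodule.Quotient.mk q := by
  let c₀ : aug R σ := ⟨c - C (constantCoeff c), by simp [aug, RingHom.mem_ker]⟩
  have hc : c • q = c₀ * q + constantCoeff c • q := Subtype.ext <| by
    change c * q.1 = (c - C (constantCoeff c)) * q.1 + constantCoeff c • q.1
    rw [smul_eq_C_mul]
    ring
  rw [hc, Submodule.Quotient.mk_add, peifferQuotient_mk_mul, Submodule.Quotient.mk_smul, ← add_smul]
  simp [c₀]

theorem aug_eq_idealOfVars : aug R σ = idealOfVars σ R := by
  ext p
  rw [← pow_one (idealOfVars σ R), mem_pow_idealOfVars_iff', aug, RingHom.mem_ker]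
  simp [Finsupp.degree_eq_zero_iff, constantCoeff_eq]

theorem span_range_XinAug :
    Submodule.span (MvPolynomial σ R) (Set.range (XinAug : σ → aug R σ)) = ⊤ :=
  (Submodule.span_range_subtype_eq_top_iff (aug R σ) fun i => (XinAug i).2).2
    aug_eq_idealOfVars.symm

theorem span_range_peifferQuotient_mk_XinAug :
    Submodule.span R (Set.range fun i => (Submodule.Quotient.mk (XinAug i) :
      aug R σ ⧸ peifferIdeal t)) = ⊤ := by
  refine Submodule.eq_top_iff'.2 fun x => ?_
  induction x using Submodule.Quotient.induction_on with | _ p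
  have hp : p ∈ Submodule.span (MvPolynomial σ R) (Set.range (XinAug (R := R))) := by
    rw [span_range_XinAug]
    trivial
  induction hp using Submodule.span_induction with
  | mem _ h =>
    obtain ⟨i, rfl⟩ := h
    exact Submodule.subset_span ⟨i, rfl⟩
  | zero => exact zero_mem _
  | add _ _ _ _ hp hq => exact add_mem hp hq
  | smul c p _ hp =>
    rw [peifferQuotient_mk_smul]
    exact Submodule.smul_mem _ _ hp

variable {t} {N : Type*} [NonUnitalCommRing N] [Module R N] [IsScalarTower R N N]
  [SMulCommClass R N N] {δ : N →ₙₐ[R] R} (hδ : ∀ x y, δ x • y = x * y) {v : σ → N}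
  (hv : ∀ i, δ (v i) = t i)

/-- The map `M ⧸ P₁ → N` provided by the universal property of the free crossed module, for a family
`v` in a crossed module `δ : N → R` lying over `t`. -/
noncomputable def peifferLift : (aug R σ ⧸ peifferIdeal t) →ₗ[R] N :=
  (peifferIdeal t).liftQ (augLift v) <| peifferIdeal_le_ker t _ fun p q => by
    rw [augLift_mul, ← hδ, map_augLift, funext hv]

theorem peifferLift_mk_XinAug (i : σ) :
    peifferLift hδ hv (Submodule.Quotient.mk (XinAug i)) = v i :=
  augLift_XinAug v i

theorem map_peifferLift (x : aug R σ ⧸ peifferIdeal t) :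
    δ (peifferLift hδ hv x) = peifferBoundary t x := by
  induction x using Submodule.Quotient.induction_on with | _ p
  exact (map_augLift δ v p).trans (by rw [funext hv, peifferBoundary_mk])

end Peiffer

section Koszul

variable {R F : Type*} [CommRing R] [AddCommGroup F] [Module R F]

/-- The Koszul differential `Λ²F → F`, `x ∧ y ↦ θ x • y - θ y • x`, of a linear form `θ`, encoded as
a bilinear map on `F`. -/
def koszulDifferential (θ : F →ₗ[R] R) : F →ₗ[R] F →ₗ[R] F :=
  LinearMap.lsmul R F ∘ₗ θ - (LinearMap.lsmul R F ∘ₗ θ).flip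

@[simp]
theorem koszulDifferential_apply (θ : F →ₗ[R] R) (x y : F) :
    koszulDifferential θ x y = θ x • y - θ y • x :=
  rfl

/-- The image of the Koszul differential of `θ`: the basis-free form of the Koszul relations. -/
def koszulSubmodule (θ : F →ₗ[R] R) : Submodule R F :=
  Submodule.map₂ (koszulDifferential θ) ⊤ ⊤

theorem koszulSubmodule_eq_span (θ : F →ₗ[R] R) {σ : Type*} {v : σ → F}
    (hv : Submodule.span R (Set.range v) = ⊤) :
    koszulSubmodule θ = Submodule.span R {z | ∃ i j, z = θ (v i) • v j - θ (v j) • v i} := by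
  rw [koszulSubmodule, ← hv, Submodule.map₂_span_span, Set.image2_range]
  congr 1
  ext z
  simp [eq_comm]

theorem koszulSubmodule_le_ker {N : Type*} [AddCommGroup N] [Module R N] {δ : N →ₗ[R] R}
    (hδ : ∀ x y, δ x • y = δ y • x) (g : F →ₗ[R] N) :
    koszulSubmodule (δ ∘ₗ g) ≤ LinearMap.ker g :=
  Submodule.map₂_le.2 fun x _ y _ => by simp [hδ (g x) (g y)]

theorem koszulSubmodule_le_ker_self (θ : F →ₗ[R] R) : koszulSubmodule θ ≤ LinearMap.ker θ :=
  koszulSubmodule_le_ker (δ := LinearMap.id (R := R)) mul_comm θ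

/-- The boundary `F ⧸ K → R` of the Koszul crossed module, induced by the linear form `θ`. -/
def koszulBoundary (θ : F →ₗ[R] R) : (F ⧸ koszulSubmodule θ) →ₗ[R] R :=
  (koszulSubmodule θ).liftQ θ (koszulSubmodule_le_ker_self θ)

@[simp]
theorem koszulBoundary_mk (θ : F →ₗ[R] R) (x : F) :
    koszulBoundary θ (Submodule.Quotient.mk x) = θ x :=
  rfl

theorem koszulBoundary_smul_comm (θ : F →ₗ[R] R) (x y : F ⧸ koszulSubmodule θ) :
    koszulBoundary θ x • y = koszulBoundary θ y • x := by
  induction x using Submodule.Quotient.induction_on with | _ x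
  induction y using Submodule.Quotient.induction_on with | _ y
  exact (Submodule.Quotient.eq _).2 (Submodule.apply_mem_map₂ _ trivial trivial)

/-- The product `x * y = δ x • y` that makes `δ : F ⧸ K → R` a crossed module. The instance is
local because for `F = R` it differs from the product of the quotient ring. -/
local instance koszulNonUnitalCommRing (θ : F →ₗ[R] R) :
    NonUnitalCommRing (F ⧸ koszulSubmodule θ) where
  mul x y := koszulBoundary θ x • y
  left_distrib _ _ _ := smul_add _ _ _
  right_distrib x y z := by
    change koszulBoundary θ (x + y) • z = koszulBoundary θ x • z + koszulBoundary θ y • z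
    rw [map_add, add_smul]
  zero_mul x := by
    change koszulBoundary θ 0 • x = 0
    rw [map_zero, zero_smul]
  mul_zero _ := smul_zero _
  mul_assoc x y z := by
    change koszulBoundary θ (koszulBoundary θ x • y) • z =
      koszulBoundary θ x • koszulBoundary θ y • z
    rw [map_smul, smul_assoc]
  mul_comm := koszulBoundary_smul_comm θ

local instance (θ : F →ₗ[R] R) :
    IsScalarTower R (F ⧸ koszulSubmodule θ) (F ⧸ koszulSubmodule θ) where
  smul_assoc r x y := by
    change koszulBoundary θ (r • x) • y = r • koszulBoundary θ x • y
    rw [map_smul, smul_assoc]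

local instance (θ : F →ₗ[R] R) :
    SMulCommClass R (F ⧸ koszulSubmodule θ) (F ⧸ koszulSubmodule θ) where
  smul_comm r x y := smul_comm r (koszulBoundary θ x) y

/-- `koszulBoundary` as a map of non-unital algebras, the form in which it is a crossed module. -/
def koszulBoundaryHom (θ : F →ₗ[R] R) : (F ⧸ koszulSubmodule θ) →ₙₐ[R] R where
  toFun := koszulBoundary θ
  map_smul' := map_smul _
  map_zero' := map_zero _
  map_add' := map_add _
  map_mul' x y := map_smul _ (koszulBoundary θ x) y

variable {σ : Type*} (b : Module.Basis σ R F) {θ : F →ₗ[R] R} {t : σ → R}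

/-- The map `M ⧸ P₁ → F ⧸ K` with `X i ↦ b i`, obtained from the freeness of `M ⧸ P₁`. -/
noncomputable def peifferToKoszul (hθ : ∀ i, θ (b i) = t i) :
    (aug R σ ⧸ peifferIdeal t) →ₗ[R] F ⧸ koszulSubmodule θ :=
  peifferLift (δ := koszulBoundaryHom θ) (v := fun i => Submodule.Quotient.mk (b i))
    (fun _ _ => rfl) hθ

theorem peifferToKoszul_mk_XinAug (hθ : ∀ i, θ (b i) = t i) (i : σ) :
    peifferToKoszul b hθ (Submodule.Quotient.mk (XinAug i)) = Submodule.Quotient.mk (b i) :=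
  peifferLift_mk_XinAug _ hθ i

theorem koszulBoundary_peifferToKoszul (hθ : ∀ i, θ (b i) = t i)
    (x : aug R σ ⧸ peifferIdeal t) :
    koszulBoundary θ (peifferToKoszul b hθ x) = peifferBoundary t x :=
  map_peifferLift (δ := koszulBoundaryHom θ) _ hθ x

theorem peifferBoundary_comp_constr_XinAug (hθ : ∀ i, θ (b i) = t i) :
    peifferBoundary t ∘ₗ b.constr R (fun i => Submodule.Quotient.mk (XinAug i)) = θ :=
  b.ext fun i => by simp [XinAug, hθ]

/-- The map `F ⧸ K → M ⧸ P₁` with `b i ↦ X i`. -/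
noncomputable def koszulToPeiffer (hθ : ∀ i, θ (b i) = t i) :
    (F ⧸ koszulSubmodule θ) →ₗ[R] aug R σ ⧸ peifferIdeal t :=
  (koszulSubmodule θ).liftQ (b.constr R fun i => Submodule.Quotient.mk (XinAug i)) <| by
    rw [← peifferBoundary_comp_constr_XinAug b hθ]
    exact koszulSubmodule_le_ker (peifferBoundary_smul_comm t) _

theorem koszulToPeiffer_mk_basis (hθ : ∀ i, θ (b i) = t i) (i : σ) :
    koszulToPeiffer b hθ (Submodule.Quotient.mk (b i)) = Submodule.Quotient.mk (XinAug i) :=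
  b.constr_basis R _ i

/-- Porter's isomorphism `M ⧸ P₁ ≃ F ⧸ K` with `X i ↦ b i`. -/
noncomputable def peifferEquivKoszul (hθ : ∀ i, θ (b i) = t i) :
    (aug R σ ⧸ peifferIdeal t) ≃ₗ[R] F ⧸ koszulSubmodule θ :=
  LinearEquiv.ofLinearMap (peifferToKoszul b hθ) (koszulToPeiffer b hθ)
    (Submodule.linearMap_qext _ <| b.ext fun i => by
      simp [koszulToPeiffer_mk_basis, peifferToKoszul_mk_XinAug])
    (LinearMap.ext_on_range (span_range_peifferQuotient_mk_XinAug t) fun i => by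
      simp [koszulToPeiffer_mk_basis, peifferToKoszul_mk_XinAug])

theorem free_crossedModule_koszul_description_general (hθ : ∀ i, θ (b i) = t i) :
    ∃ φ : (aug R σ ⧸ peifferIdeal t) ≃ₗ[R] (F ⧸ koszulSubmodule θ),
      (∀ i, φ (Submodule.Quotient.mk (XinAug i)) = Submodule.Quotient.mk (b i)) ∧
      ∀ (p : aug R σ) (x : F), φ (Submodule.Quotient.mk p) = Submodule.Quotient.mk x →
        aeval t (p : MvPolynomial σ R) = θ x := by
  refine ⟨peifferEquivKoszul b hθ, peifferToKoszul_mk_XinAug b hθ, fun p x hpx => ?_⟩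
  rw [← peifferBoundary_mk, ← koszulBoundary_peifferToKoszul b hθ, ← koszulBoundary_mk]
  exact congrArg (koszulBoundary θ) hpx

end Koszul

theorem koszulRel_eq_koszulSubmodule {R : Type*} [CommRing R] {n : ℕ} (t : Fin n → R) :
    koszulRel t = koszulSubmodule (Fintype.linearCombination R t) := by
  rw [koszulSubmodule_eq_span _ (Pi.basisFun R (Fin n)).span_eq]
  simp [koszulRel]

/-- There is an `R`-module isomorphism `M/P₁ ≅ (Fin n → R)/K` sending the
class of `X i` to the class of `e i`; moreover, under this isomorphism the map `M/P₁ → R`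
induced by `aeval t` corresponds to the map `(Fin n → R)/K → R` induced by
`r ↦ ∑ i, r i * t i`.  (Porter's Koszul-type description of the free crossed module.) -/
theorem free_crossedModule_koszul_description
    {R : Type*} [CommRing R] (n : ℕ) (t : Fin n → R) :
    ∃ φ : (aug R (Fin n) ⧸ peifferIdeal t) ≃ₗ[R] ((Fin n → R) ⧸ koszulRel t),
      (∀ i : Fin n, φ (Submodule.Quotient.mk (XinAug i))
          = Submodule.Quotient.mk (Pi.single i 1 : Fin n → R)) ∧
      (∀ (p : aug R (Fin n)) (x : Fin n → R),
        φ (Submodule.Quotient.mk p) = Submodule.Quotient.mk x →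
          aeval t (p : MvPolynomial (Fin n) R) = ∑ i : Fin n, x i * t i) := by
  rw [koszulRel_eq_koszulSubmodule]
  simpa [Fintype.linearCombination_apply] using free_crossedModule_koszul_description_general
    (Pi.basisFun R (Fin n)) (θ := Fintype.linearCombination R t) (t := t) (by simp)
end

section
/- Let R be a commutative ring, n a natural number, and t : Fin n → R. Let K be the R-submodule of Fin n → R generated by the elements t i • e j − t j • e i for i, j ∈ Fin n, where e i = Pi.single i 1. If x : Fin n → R satisfies ∑_{i} x i * t i = 0, then t j • x ∈ K for every j ∈ Fin n. Consequently the kernel of the map (Fin n → R)/K → R induced by r ↦ ∑_{i} r i * t i is annihilated by the ideal of R generated by the t i, i.e. it is a module over B = R/(t₁, …, tₙ). -/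
/-!
For a linear form `φ`, the expression `φ x • y - φ y • x` is bilinear in `x` and `y`, so its values
on a generating family already span all of its values. If `φ y = 0` it reduces to `φ x • y`, and
`φ x` runs through the whole ideal generated by the values of `φ` on the generators.
-/

section KoszulBilin

variable {R M ι : Type*} [CommRing R] [AddCommGroup M] [Module R M]

/-- The Koszul differential `x ∧ y ↦ φ x • y - φ y • x` of a linear form `φ` in degree two, encoded
as a bilinear map; its values are the Peiffer elements of `φ`. -/
def koszulBilin (φ : M →ₗ[R] R) : M →ₗ[R] M →ₗ[R] M :=
  (LinearMap.lsmul R M).comp φ - ((LinearMap.lsmul R M).comp φ).flip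

theorem koszulBilin_apply (φ : M →ₗ[R] R) (x y : M) :
    koszulBilin φ x y = φ x • y - φ y • x :=
  rfl

theorem koszulBilin_mem_span (φ : M →ₗ[R] R) {e : ι → M}
    (he : Submodule.span R (Set.range e) = ⊤) (x y : M) :
    koszulBilin φ x y ∈ Submodule.span R {z | ∃ i j, z = koszulBilin φ (e i) (e j)} := by
  have hxy : koszulBilin φ x y ∈ Submodule.map₂ (koszulBilin φ) ⊤ ⊤ :=
    Submodule.apply_mem_map₂ _ Submodule.mem_top Submodule.mem_top
  rw [← he, Submodule.map₂_span_span, Set.image2_range] at hxy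
  simpa only [Set.range, Prod.exists, eq_comm] using hxy

theorem smul_mem_span_koszulBilin (φ : M →ₗ[R] R) {e : ι → M}
    (he : Submodule.span R (Set.range e) = ⊤) {x : M} (hx : φ x = 0) (y : M) :
    φ y • x ∈ Submodule.span R {z | ∃ i j, z = koszulBilin φ (e i) (e j)} := by
  simpa only [koszulBilin_apply, hx, zero_smul, sub_zero] using koszulBilin_mem_span φ he y x

theorem range_eq_ideal_span_of_span_eq_top (φ : M →ₗ[R] R) {e : ι → M}
    (he : Submodule.span R (Set.range e) = ⊤) :
    LinearMap.range φ = Ideal.span (Set.range fun i => φ (e i)) := by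
  rw [LinearMap.range_eq_map, ← he, Submodule.map_span, ← Set.range_comp]
  rfl

theorem koszul_kernel_annihilated_general (φ : M →ₗ[R] R) {e : ι → M}
    (he : Submodule.span R (Set.range e) = ⊤) (K : Submodule R M)
    (hK : K = Submodule.span R {z | ∃ i j, z = φ (e i) • e j - φ (e j) • e i}) :
    (∀ x, φ x = 0 → ∀ j, φ (e j) • x ∈ K) ∧
    (∀ r ∈ Ideal.span (Set.range fun i => φ (e i)), ∀ x, φ x = 0 →
      r • (Submodule.Quotient.mk x : M ⧸ K) = 0) := by
  have smul_mem {x : M} (hx : φ x = 0) (y : M) : φ y • x ∈ K :=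
    hK ▸ smul_mem_span_koszulBilin φ he hx y
  refine ⟨fun x hx j => smul_mem hx (e j), fun r hr x hx => ?_⟩
  rw [← range_eq_ideal_span_of_span_eq_top φ he] at hr
  obtain ⟨y, rfl⟩ := hr
  exact (Submodule.Quotient.mk_eq_zero K).2 (smul_mem hx y)

end KoszulBilin

/-- Let `K` be the `R`-submodule of `Fin n → R` generated by the elements
`t i • e j - t j • e i` (with `e i = Pi.single i 1`).  If `x : Fin n → R` satisfies
`∑ i, x i * t i = 0`, then `t j • x ∈ K` for every `j`.  Consequently the kernel of the map
`(Fin n → R)/K → R` induced by `r ↦ ∑ i, r i * t i` is annihilated by the ideal of `R`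
generated by the `t i`, i.e. it is a module over `B = R/(t₁, …, tₙ)`. -/
theorem koszul_kernel_annihilated
    {R : Type*} [CommRing R] (n : ℕ) (t : Fin n → R)
    (K : Submodule R (Fin n → R))
    (hK : K = Submodule.span R
      {z : Fin n → R | ∃ i j : Fin n,
        z = t i • (Pi.single j 1 : Fin n → R) - t j • (Pi.single i 1 : Fin n → R)}) :
    (∀ x : Fin n → R, (∑ i : Fin n, x i * t i) = 0 → ∀ j : Fin n, t j • x ∈ K) ∧
    (∀ r ∈ Ideal.span (Set.range t), ∀ x : Fin n → R, (∑ i : Fin n, x i * t i) = 0 →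
      r • (Submodule.Quotient.mk x : (Fin n → R) ⧸ K) = 0) := by
  simpa [Fintype.linearCombination_apply, Pi.single_apply] using
    koszul_kernel_annihilated_general (Fintype.linearCombination R t)
      (Pi.basisFun R (Fin n)).span_eq K (by simpa using hK)
end

section
/- Let (M, R, ∂₁) and (N, R, ∂₂) be crossed modules of commutative algebras over a commutative ring R. Define on M × N componentwise addition, the R-action r • (m, n) = (r • m, r • n), and the multiplication (m, n) * (m', n') = (m * m', ∂₁(m) • n' + ∂₁(m') • n + n * n'). Then M × N is a non-unital commutative ring whose R-action satisfies r • (x * x') = (r • x) * x', and the map δ̄ : M × N → R defined by δ̄(m, n) = ∂₁(m) + ∂₂(n) is additive, multiplicative, and satisfies δ̄(r • x) = r * δ̄(x); that is, (M × N, R, δ̄) is a pre-crossed module (the semidirect product M ⋊ N underlying the coproduct of M and N in the category of crossed R-modules). -/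
/-!
The map `(m, n) ↦ (m, d₁ m + n)` embeds the semidirect product into the product of `M` with the
unitization `R ⊕ N`, and it is multiplicative because
`(d₁ m + n) * (d₁ m' + n') = d₁ (m * m') + (d₁ m • n' + d₁ m' • n + n * n')` in `R ⊕ N`.
The ring axioms are therefore inherited from `M × (R ⊕ N)`. By the universal property of the
unitization `d₂` extends to an algebra homomorphism `R ⊕ N → R`, and `δ̄` is its composite with the
second component of the embedding.
-/

/-- The semidirect product `M ⋊ N` of non-unital `R`-algebras, where `m : M` acts on `N` as the
scalar `d m`. It is a type synonym of `M × N`, indexed by `d` because its multiplication depends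
on `d`. -/
def AlgSemidirectProduct {R M : Type*} [CommSemiring R] [NonUnitalCommSemiring M] [Module R M]
    (_d : M →ₙₐ[R] R) (N : Type*) : Type _ :=
  M × N

namespace AlgSemidirectProduct

variable {R M : Type*} [CommSemiring R] [NonUnitalCommSemiring M] [Module R M]
  {d : M →ₙₐ[R] R} {N : Type*} [NonUnitalCommSemiring N]

instance : AddCommMonoid (AlgSemidirectProduct d N) :=
  inferInstanceAs (AddCommMonoid (M × N))

theorem fst_add (x y : AlgSemidirectProduct d N) : (x + y).1 = x.1 + y.1 := rfl

theorem snd_add (x y : AlgSemidirectProduct d N) : (x + y).2 = x.2 + y.2 := rfl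

variable [Module R N]

instance : Module R (AlgSemidirectProduct d N) :=
  inferInstanceAs (Module R (M × N))

instance : Mul (AlgSemidirectProduct d N) where
  mul x y := (x.1 * y.1, d x.1 • y.2 + d y.1 • x.2 + x.2 * y.2)

theorem fst_smul (r : R) (x : AlgSemidirectProduct d N) : (r • x).1 = r • x.1 := rfl

theorem snd_smul (r : R) (x : AlgSemidirectProduct d N) : (r • x).2 = r • x.2 := rfl

theorem fst_mul (x y : AlgSemidirectProduct d N) : (x * y).1 = x.1 * y.1 := rfl

theorem snd_mul (x y : AlgSemidirectProduct d N) :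
    (x * y).2 = d x.1 • y.2 + d y.1 • x.2 + x.2 * y.2 := rfl

variable (d N) in
/-- The embedding `(m, n) ↦ (m, d m + n)` of `M ⋊ N` into the product of `M` with the unitization
of `N`; its image is the fibre product of `M` and `Unitization R N` over `R`. -/
def toProdUnitization : AlgSemidirectProduct d N →ₗ[R] M × Unitization R N where
  toFun x := (x.1, Unitization.inl (d x.1) + (x.2 : Unitization R N))
  map_add' x y := by
    ext <;> simp [fst_add, snd_add]
  map_smul' r x := by
    ext <;> simp [fst_smul, snd_smul]

theorem toProdUnitization_apply (x : AlgSemidirectProduct d N) :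
    toProdUnitization d N x = (x.1, Unitization.inl (d x.1) + (x.2 : Unitization R N)) := rfl

theorem toProdUnitization_injective : Function.Injective (toProdUnitization d N) := by
  intro x y h
  obtain ⟨h_fst, h_unitization⟩ := Prod.mk.inj h
  have h_snd : x.2 = y.2 := by
    simpa using congrArg (·.snd) h_unitization
  exact Prod.ext h_fst h_snd

theorem toProdUnitization_mul (x y : AlgSemidirectProduct d N) :
    toProdUnitization d N (x * y) = toProdUnitization d N x * toProdUnitization d N y := by
  ext <;> simp [toProdUnitization_apply, fst_mul, snd_mul]

section Algebra

variable [IsScalarTower R N N] [SMulCommClass R N N]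

instance : NonUnitalCommSemiring (AlgSemidirectProduct d N) where
  toAddCommMonoid := inferInstance
  __ := toProdUnitization_injective.nonUnitalCommSemiring (toProdUnitization d N) (map_zero _)
    (map_add _) toProdUnitization_mul fun n x => map_nsmul (toProdUnitization d N) n x

instance [IsScalarTower R M M] :
    IsScalarTower R (AlgSemidirectProduct d N) (AlgSemidirectProduct d N) where
  smul_assoc r x y := toProdUnitization_injective <| by
    simp only [smul_eq_mul, toProdUnitization_mul, map_smul, smul_mul_assoc]

variable (d N) in
/-- The embedding `toProdUnitization` as a homomorphism of non-unital `R`-algebras. -/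
def toProdUnitizationHom : AlgSemidirectProduct d N →ₙₐ[R] M × Unitization R N where
  __ := toProdUnitization d N
  map_zero' := map_zero (toProdUnitization d N)
  map_mul' := toProdUnitization_mul

/-- The map `δ̄ : M ⋊ N → R` making the semidirect product of two pre-crossed modules a pre-crossed
module. -/
def boundary (d₁ : M →ₙₐ[R] R) (d₂ : N →ₙₐ[R] R) : AlgSemidirectProduct d₁ N →ₙₐ[R] R :=
  (Unitization.lift d₂ : Unitization R N →ₙₐ[R] R).comp
    ((NonUnitalAlgHom.snd R M (Unitization R N)).comp (toProdUnitizationHom d₁ N))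

theorem boundary_apply (d₁ : M →ₙₐ[R] R) (d₂ : N →ₙₐ[R] R) (x : AlgSemidirectProduct d₁ N) :
    boundary d₁ d₂ x = d₁ x.1 + d₂ x.2 :=
  calc
    boundary d₁ d₂ x = Unitization.lift d₂ (Unitization.inl (d₁ x.1) + (x.2 : Unitization R N)) :=
      rfl
    _ = d₁ x.1 + d₂ x.2 := by simp

end Algebra

end AlgSemidirectProduct

theorem semidirectProduct_preCrossedModule_general
    {R : Type*} [CommSemiring R]
    {M : Type*} [NonUnitalCommSemiring M] [Module R M]
    {N : Type*} [NonUnitalCommSemiring N] [Module R N]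
    (hactM : ∀ (r : R) (m m' : M), r • (m * m') = (r • m) * m')
    (hactN : ∀ (r : R) (n n' : N), r • (n * n') = (r • n) * n')
    (d₁ : M → R)
    (hadd₁ : ∀ m m' : M, d₁ (m + m') = d₁ m + d₁ m')
    (hmul₁ : ∀ m m' : M, d₁ (m * m') = d₁ m * d₁ m')
    (hCM1₁ : ∀ (r : R) (m : M), d₁ (r • m) = r * d₁ m)
    (d₂ : N → R)
    (hadd₂ : ∀ n n' : N, d₂ (n + n') = d₂ n + d₂ n')
    (hmul₂ : ∀ n n' : N, d₂ (n * n') = d₂ n * d₂ n')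
    (hCM1₂ : ∀ (r : R) (n : N), d₂ (r • n) = r * d₂ n)
    (mul : M × N → M × N → M × N)
    (hmul : ∀ x y : M × N,
      mul x y = (x.1 * y.1, d₁ x.1 • y.2 + d₁ y.1 • x.2 + x.2 * y.2))
    (δbar : M × N → R)
    (hδbar : ∀ x : M × N, δbar x = d₁ x.1 + d₂ x.2) :
    (∀ x y : M × N, mul x y = mul y x) ∧
    (∀ x y z : M × N, mul (mul x y) z = mul x (mul y z)) ∧
    (∀ x y z : M × N, mul x (y + z) = mul x y + mul x z) ∧
    (∀ x y z : M × N, mul (x + y) z = mul x z + mul y z) ∧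
    (∀ (r : R) (x y : M × N), r • mul x y = mul (r • x) y) ∧
    (∀ x y : M × N, δbar (x + y) = δbar x + δbar y) ∧
    (∀ x y : M × N, δbar (mul x y) = δbar x * δbar y) ∧
    (∀ (r : R) (x : M × N), δbar (r • x) = r * δbar x) := by
  have : IsScalarTower R M M := ⟨fun r m m' => (hactM r m m').symm⟩
  have : IsScalarTower R N N := ⟨fun r n n' => (hactN r n n').symm⟩
  have : SMulCommClass R N N := ⟨fun r n n' => by
    simp only [smul_eq_mul, mul_comm n, smul_mul_assoc]⟩
  let D₁ : M →ₙₐ[R] R :=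
    { toFun := d₁, map_smul' := hCM1₁, map_zero' := by simpa using hCM1₁ 0 0
      map_add' := hadd₁, map_mul' := hmul₁ }
  let D₂ : N →ₙₐ[R] R :=
    { toFun := d₂, map_smul' := hCM1₂, map_zero' := by simpa using hCM1₂ 0 0
      map_add' := hadd₂, map_mul' := hmul₂ }
  let P := AlgSemidirectProduct D₁ N
  obtain rfl : mul = fun x y : P => x * y := funext₂ hmul
  obtain rfl : δbar = AlgSemidirectProduct.boundary D₁ D₂ :=
    funext fun x => (hδbar x).trans (AlgSemidirectProduct.boundary_apply D₁ D₂ x).symm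
  exact ⟨mul_comm (G := P), mul_assoc (G := P), mul_add (R := P), add_mul (R := P),
    fun r (x y : P) => (smul_mul_assoc r x y).symm, map_add (AlgSemidirectProduct.boundary D₁ D₂),
    map_mul (AlgSemidirectProduct.boundary D₁ D₂), map_smul (AlgSemidirectProduct.boundary D₁ D₂)⟩

/-- Let `(M, R, ∂₁)` and `(N, R, ∂₂)` be crossed modules of commutative
algebras over `R`.  Equip `M × N` with componentwise addition, the `R`-action
`r • (m, n) = (r • m, r • n)`, and the multiplication
`(m, n) * (m', n') = (m m', ∂₁ m • n' + ∂₁ m' • n + n n')`.  Then `M × N` is a non-unital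
commutative ring whose `R`-action satisfies `r • (x * x') = (r • x) * x'`, and
`δ̄ (m, n) = ∂₁ m + ∂₂ n` is additive, multiplicative and satisfies (CM1); i.e.
`(M × N, R, δ̄)` is a pre-crossed module (the semidirect product `M ⋊ N` underlying the
coproduct of `M` and `N` in the category of crossed `R`-modules). -/
theorem semidirectProduct_preCrossedModule
    {R : Type*} [CommRing R]
    {M : Type*} [NonUnitalCommRing M] [Module R M]
    {N : Type*} [NonUnitalCommRing N] [Module R N]
    (hactM : ∀ (r : R) (m m' : M), r • (m * m') = (r • m) * m')
    (hactN : ∀ (r : R) (n n' : N), r • (n * n') = (r • n) * n')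
    (d₁ : M → R)
    (hadd₁ : ∀ m m' : M, d₁ (m + m') = d₁ m + d₁ m')
    (hmul₁ : ∀ m m' : M, d₁ (m * m') = d₁ m * d₁ m')
    (hCM1₁ : ∀ (r : R) (m : M), d₁ (r • m) = r * d₁ m)
    (hCM2₁ : ∀ m m' : M, d₁ m • m' = m * m')
    (d₂ : N → R)
    (hadd₂ : ∀ n n' : N, d₂ (n + n') = d₂ n + d₂ n')
    (hmul₂ : ∀ n n' : N, d₂ (n * n') = d₂ n * d₂ n')
    (hCM1₂ : ∀ (r : R) (n : N), d₂ (r • n) = r * d₂ n)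
    (hCM2₂ : ∀ n n' : N, d₂ n • n' = n * n')
    (mul : M × N → M × N → M × N)
    (hmul : ∀ x y : M × N,
      mul x y = (x.1 * y.1, d₁ x.1 • y.2 + d₁ y.1 • x.2 + x.2 * y.2))
    (δbar : M × N → R)
    (hδbar : ∀ x : M × N, δbar x = d₁ x.1 + d₂ x.2) :
    -- `M × N` is a non-unital commutative ring:
    (∀ x y : M × N, mul x y = mul y x) ∧
    (∀ x y z : M × N, mul (mul x y) z = mul x (mul y z)) ∧
    (∀ x y z : M × N, mul x (y + z) = mul x y + mul x z) ∧
    (∀ x y z : M × N, mul (x + y) z = mul x z + mul y z) ∧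
    -- compatibility of the `R`-action with the multiplication:
    (∀ (r : R) (x y : M × N), r • mul x y = mul (r • x) y) ∧
    -- `δ̄` is additive, multiplicative and satisfies (CM1):
    (∀ x y : M × N, δbar (x + y) = δbar x + δbar y) ∧
    (∀ x y : M × N, δbar (mul x y) = δbar x * δbar y) ∧
    (∀ (r : R) (x : M × N), δbar (r • x) = r * δbar x) :=
  semidirectProduct_preCrossedModule_general hactM hactN d₁ hadd₁ hmul₁ hCM1₁ d₂ hadd₂ hmul₂ hCM1₂
    mul hmul δbar hδbar
end
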